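/- Let V be a finite set of even cardinality, let c be a coloring assigning each unordered pair of distinct elements of V a color in {1,2,3}, and let M be a round-maximal perfect matching of V. Let {u,v} be a pair of M with c({u,v}) = 1 and let {w,z} be a different pair of M with c({w,z}) = 2. Then it is not the case that both c({u,w}) = 1 and c({v,z}) = 1, and it is not the case that both c({u,z}) = 1 and c({v,w}) = 1. In particular, at most two of the four edges between {u,v} and {w,z} have color 1. -/

import Mathlib

/-!
The claim is an exchange argument. If `{u, w}` and `{v, z}` both had color `1`, replacing the pairs
`{u, v}` (color `1`) and `{w, z}` (color `2`) of `M` by them would give a perfect matching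
(`IsPM.exchange`) with the same `m₁ + m₂` and with `m₁` larger by one, contradicting
maximality (`RoundMaximal.not_cross`). The other crossing follows by swapping the names of `w` and
`z`. Each of the two crossings therefore contains an edge of color different from `1`, which leaves
at most two edges of color `1`.
-/

/-- `M` is a perfect matching of the vertex set `V`: a partition of `V` into pairs,
viewed as a finset of non-diagonal unordered pairs covering each vertex exactly once. -/
def IsPM {V : Type*} (M : Finset (Sym2 V)) : Prop :=
  (∀ e ∈ M, ¬ e.IsDiag) ∧ ∀ x : V, ∃! e : Sym2 V, e ∈ M ∧ x ∈ e

/-- `mcount c M i` is the number of pairs of `M` having color `i` under the coloring `c`. -/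
def mcount {V : Type*} (c : Sym2 V → ℕ) (M : Finset (Sym2 V)) (i : ℕ) : ℕ :=
  (M.filter fun e => c e = i).card

/-- `M` is a round-maximal perfect matching: it lexicographically maximizes
`(m₁ + m₂, m₁)` among all perfect matchings of `V`. -/
def RoundMaximal {V : Type*} (c : Sym2 V → ℕ) (M : Finset (Sym2 V)) : Prop :=
  IsPM M ∧ ∀ M' : Finset (Sym2 V), IsPM M' →
    mcount c M' 1 + mcount c M' 2 < mcount c M 1 + mcount c M 2 ∨
    (mcount c M' 1 + mcount c M' 2 = mcount c M 1 + mcount c M 2 ∧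
      mcount c M' 1 ≤ mcount c M 1)

/-- An edge `e` (a non-diagonal pair not in `M`) is free with respect to `M` and `c`
if `c e` is strictly less than the color of the `M`-pair containing at least one of
the endpoints of `e`. -/
def IsFreeEdge {V : Type*} (c : Sym2 V → ℕ) (M : Finset (Sym2 V)) (e : Sym2 V) : Prop :=
  e ∉ M ∧ ¬ e.IsDiag ∧ ∃ (x : V) (f : Sym2 V), x ∈ e ∧ f ∈ M ∧ x ∈ f ∧ c e < c f

theorem IsPM.eq_of_mem {V : Type*} {M : Finset (Sym2 V)} (hM : IsPM M) {e f : Sym2 V} {x : V}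
    (he : e ∈ M) (hf : f ∈ M) (hxe : x ∈ e) (hxf : x ∈ f) : e = f :=
  (hM.2 x).unique ⟨he, hxe⟩ ⟨hf, hxf⟩

theorem mcount_insert {V : Type*} [DecidableEq V] (c : Sym2 V → ℕ) {R : Finset (Sym2 V)}
    {e : Sym2 V} (he : e ∉ R) (i : ℕ) :
    mcount c (insert e R) i = mcount c R i + if c e = i then 1 else 0 := by
  unfold mcount
  rw [Finset.filter_insert]
  split_ifs with h
  · rw [Finset.card_insert_of_notMem (by simp [he])]
  · rfl

/-- Exchanging two pairs `{u, v}`, `{w, z}` of a perfect matching for `{u, w}`, `{v, z}`: with `R`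
the set of the remaining pairs, the result is again a perfect matching. The hypotheses on `R` say
that it covers exactly the vertices other than `u`, `v`, `w`, `z`, each once. -/
theorem IsPM.exchange {V : Type*} [DecidableEq V] {R : Finset (Sym2 V)} {u v w z : V}
    (huw : u ≠ w) (huz : u ≠ z) (hvw : v ≠ w) (hvz : v ≠ z) (huv : u ≠ v) (hwz : w ≠ z)
    (hR : ∀ e ∈ R, ¬ e.IsDiag ∧ u ∉ e ∧ v ∉ e ∧ w ∉ e ∧ z ∉ e)
    (hcov : ∀ x, x ≠ u → x ≠ v → x ≠ w → x ≠ z → ∃! e, e ∈ R ∧ x ∈ e) :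
    IsPM (insert s(u, w) (insert s(v, z) R)) := by
  refine ⟨?_, fun x => ?_⟩
  · intro e he
    simp only [Finset.mem_insert] at he
    rcases he with rfl | rfl | he
    · simpa using huw
    · simpa using hvz
    · exact (hR e he).1
  · by_cases h1 : x = u ∨ x = w
    · refine ⟨s(u, w), by simpa using h1, ?_⟩
      rintro e ⟨he, hx⟩
      simp only [Finset.mem_insert] at he
      rcases he with rfl | rfl | he
      · rfl
      · simp only [Sym2.mem_iff] at hx
        grind
      · have := hR e he
        grind
    by_cases h2 : x = v ∨ x = z
    · refine ⟨s(v, z), by simpa using h2, ?_⟩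
      rintro e ⟨he, hx⟩
      simp only [Finset.mem_insert] at he
      rcases he with rfl | rfl | he
      · simp only [Sym2.mem_iff] at hx
        grind
      · rfl
      · have := hR e he
        grind
    push Not at h1 h2
    obtain ⟨e, ⟨he, hx⟩, huniq⟩ := hcov x h1.1 h2.1 h1.2 h2.2
    refine ⟨e, ⟨by simp [he], hx⟩, ?_⟩
    rintro f ⟨hf, hxf⟩
    simp only [Finset.mem_insert] at hf
    rcases hf with rfl | rfl | hf
    · simp [h1] at hxf
    · simp [h2] at hxf
    · exact huniq f ⟨hf, hxf⟩

/-- In a round-maximal matching, the crossing `{u, w}`, `{v, z}` of a pair of color `1` and a pair of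
color `2` is not entirely of color `1`. -/
theorem RoundMaximal.not_cross {V : Type*} [DecidableEq V] {c : Sym2 V → ℕ}
    {M : Finset (Sym2 V)} (hM : RoundMaximal c M) {u v w z : V}
    (huv : s(u, v) ∈ M) (hcuv : c s(u, v) = 1) (hwz : s(w, z) ∈ M) (hcwz : c s(w, z) = 2)
    (hne : s(u, v) ≠ s(w, z)) : ¬ (c s(u, w) = 1 ∧ c s(v, z) = 1) := by
  rintro ⟨h1, h2⟩
  obtain ⟨hPM, hmax⟩ := hM
  have key : ∀ x, x ∈ s(u, v) → x ∉ s(w, z) := fun x hx hx' =>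
    hne (hPM.eq_of_mem huv hwz hx hx')
  have nuv : u ≠ v := by simpa using hPM.1 _ huv
  have nwz : w ≠ z := by simpa using hPM.1 _ hwz
  have ku := key u (by simp)
  have kv := key v (by simp)
  simp only [Sym2.mem_iff, not_or] at ku kv
  set R := (M.erase s(u, v)).erase s(w, z) with hRdef
  have memR : ∀ e, e ∈ R ↔ e ≠ s(w, z) ∧ e ≠ s(u, v) ∧ e ∈ M := by simp [R]
  have hR : ∀ e ∈ R, ¬ e.IsDiag ∧ u ∉ e ∧ v ∉ e ∧ w ∉ e ∧ z ∉ e := by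
    intro e he
    obtain ⟨e1, e2, e3⟩ := (memR e).1 he
    exact ⟨hPM.1 e e3,
      fun h => e2 (hPM.eq_of_mem e3 huv h (by simp)),
      fun h => e2 (hPM.eq_of_mem e3 huv h (by simp)),
      fun h => e1 (hPM.eq_of_mem e3 hwz h (by simp)),
      fun h => e1 (hPM.eq_of_mem e3 hwz h (by simp))⟩
  have hcov : ∀ x, x ≠ u → x ≠ v → x ≠ w → x ≠ z → ∃! e, e ∈ R ∧ x ∈ e := by
    intro x xu xv xw xz
    obtain ⟨e, ⟨he, hx⟩, huniq⟩ := hPM.2 x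
    refine ⟨e, ⟨(memR e).2 ⟨?_, ?_, he⟩, hx⟩, fun f hf => huniq f ⟨((memR f).1 hf.1).2.2, hf.2⟩⟩
    · rintro rfl
      simp [xw, xz] at hx
    · rintro rfl
      simp [xu, xv] at hx
  have hPM' := IsPM.exchange ku.1 ku.2 kv.1 kv.2 nuv nwz hR hcov
  have hMR : M = insert s(u, v) (insert s(w, z) R) := by
    rw [hRdef, Finset.insert_erase (Finset.mem_erase.2 ⟨hne.symm, hwz⟩), Finset.insert_erase huv]
  have n1 : s(w, z) ∉ R := fun h => (hR _ h).2.2.2.1 (by simp)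
  have n2 : s(u, v) ∉ insert s(w, z) R := by
    rw [Finset.mem_insert, not_or]
    exact ⟨hne, fun h => (hR _ h).2.1 (by simp)⟩
  have n3 : s(v, z) ∉ R := fun h => (hR _ h).2.2.1 (by simp)
  have n4 : s(u, w) ∉ insert s(v, z) R := by
    rw [Finset.mem_insert, not_or]
    refine ⟨fun h => ?_, fun h => (hR _ h).2.1 (by simp)⟩
    have : u ∈ s(v, z) := h ▸ Sym2.mem_mk_left u w
    simp [nuv, ku.2] at this
  have hcount : ∀ i, mcount c M i =
      mcount c R i + (if (2 : ℕ) = i then 1 else 0) + if (1 : ℕ) = i then 1 else 0 := by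
    intro i
    rw [hMR, mcount_insert c n2, mcount_insert c n1, hcuv, hcwz]
  have hcount' : ∀ i, mcount c (insert s(u, w) (insert s(v, z) R)) i =
      mcount c R i + (if (1 : ℕ) = i then 1 else 0) + if (1 : ℕ) = i then 1 else 0 := by
    intro i
    rw [mcount_insert c n4, mcount_insert c n3, h1, h2]
  have := hmax _ hPM'
  simp only [hcount, hcount'] at this
  norm_num at this
  omega

/-- Let `V` be a finite set of even cardinality, `c` a coloring of edges by colors in
`{1,2,3}`, and `M` a round-maximal perfect matching. Let `{u,v}` be a pair of `M` of
color `1` and `{w,z}` a different pair of `M` of color `2`. Then it is not the case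
that both `c {u,w} = 1` and `c {v,z} = 1`, not the case that both `c {u,z} = 1` and
`c {v,w} = 1`; in particular at most two of the four edges between `{u,v}` and
`{w,z}` have color `1`. -/
theorem stmt_13 {V : Type*} [Fintype V] [DecidableEq V]
    (hV : Even (Fintype.card V)) (c : Sym2 V → ℕ)
    (hc : ∀ e : Sym2 V, ¬ e.IsDiag → c e ∈ ({1, 2, 3} : Set ℕ))
    (M : Finset (Sym2 V)) (hM : RoundMaximal c M)
    (u v w z : V) (huv : s(u, v) ∈ M) (hcuv : c s(u, v) = 1)
    (hwz : s(w, z) ∈ M) (hcwz : c s(w, z) = 2)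
    (hne : s(u, v) ≠ s(w, z)) :
    ¬ (c s(u, w) = 1 ∧ c s(v, z) = 1) ∧
    ¬ (c s(u, z) = 1 ∧ c s(v, w) = 1) ∧
    (({s(u, w), s(u, z), s(v, w), s(v, z)} : Finset (Sym2 V)).filter
        fun e => c e = 1).card ≤ 2 := by
  have hA := hM.not_cross huv hcuv hwz hcwz hne
  have hB : ¬ (c s(u, z) = 1 ∧ c s(v, w) = 1) := by
    rw [Sym2.eq_swap (a := w)] at hwz hcwz hne
    exact hM.not_cross huv hcuv hwz hcwz hne
  refine ⟨hA, hB, ?_⟩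
  clear hc hM huv hcuv hwz hcwz hne hV
  generalize s(u, w) = p, s(v, z) = p₂, s(u, z) = q, s(v, w) = q₂ at *
  -- Each crossing has at most one edge of color `1`: `a` for `{p, p₂}` and `b` for `{q, q₂}`.
  have hsub : ∃ a b : Sym2 V,
      (({p, q, q₂, p₂} : Finset (Sym2 V)).filter fun e => c e = 1) ⊆ {a, b} := by
    have aux : ∀ {x y : Sym2 V}, ¬ (c x = 1 ∧ c y = 1) →
        ∃ a, ∀ e, c e = 1 → e = x ∨ e = y → e = a := by
      intro x y h
      by_cases hx : c x = 1
      · exact ⟨x, by rintro e he (rfl | rfl) <;> tauto⟩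
      · exact ⟨y, by rintro e he (rfl | rfl) <;> tauto⟩
    obtain ⟨a, ha⟩ := aux hA
    obtain ⟨b, hb⟩ := aux hB
    refine ⟨a, b, fun e he => ?_⟩
    simp only [Finset.mem_filter, Finset.mem_insert, Finset.mem_singleton] at he ⊢
    have := ha e he.2
    have := hb e he.2
    tauto
  obtain ⟨a, b, hab⟩ := hsub
  exact (Finset.card_le_card hab).trans Finset.card_le_two
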